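/- Every odd positive integer can be written in the form 2a² + b² + c² for integers a, b, c. -/

import Mathlib

/-- Reduction of positive binary forms `A y² + 2 B y z + C z²`. -/
theorem binary_reduce (N : ℕ) : ∀ A B C D : ℤ, A.toNat ≤ N → 0 < A → 0 < D → A * C - B ^ 2 = D →
    ∃ p q r s : ℤ, p * s - q * r = 1 ∧ 0 < A * p ^ 2 + 2 * B * p * r + C * r ^ 2 ∧
      3 * (A * p ^ 2 + 2 * B * p * r + C * r ^ 2) ^ 2 ≤ 4 * D := by
  induction N with
  | zero => intro A B C D h1 h2; omega
  | succ N ih =>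
    intro A B C D hN hA hD hdet
    obtain ⟨k, hk1, hk2⟩ : ∃ k : ℤ, -A ≤ 2 * (B + k * A) ∧ 2 * (B + k * A) ≤ A := by
      refine ⟨-((2 * B + A) / (2 * A)), ?_, ?_⟩
      · have := Int.ediv_mul_le (2 * B + A) (b := 2 * A) (by omega)
        nlinarith
      · have := Int.lt_ediv_add_one_mul_self (2 * B + A) (b := 2 * A) (by omega)
        nlinarith
    obtain ⟨B', hB'⟩ : ∃ B', B' = B + k * A := ⟨_, rfl⟩
    obtain ⟨C', hC'⟩ : ∃ C', C' = C + 2 * k * B + k ^ 2 * A := ⟨_, rfl⟩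
    have hdet' : A * C' - B' ^ 2 = D := by rw [hB', hC', ← hdet]; ring
    rw [← hB'] at hk1 hk2
    have hsq : 4 * B' ^ 2 ≤ A ^ 2 := by nlinarith
    by_cases hlt : C' < A
    · have hCpos : 0 < C' := by
        by_contra h
        nlinarith [sq_nonneg B']
      obtain ⟨p, q, r, s, h1, h2, h3⟩ := ih C' (-B') A D (by omega) hCpos hD (by rw [← hdet']; ring)
      have e : A * (k * p - r) ^ 2 + 2 * B * (k * p - r) * p + C * p ^ 2
          = C' * p ^ 2 + 2 * (-B') * p * r + A * r ^ 2 := by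
        rw [hB', hC']; ring
      refine ⟨k * p - r, k * q - s, p, q, by linarith, ?_, ?_⟩
      · rw [e]; exact h2
      · rw [e]; exact h3
    · refine ⟨1, 0, 0, 1, by norm_num, by simpa using hA, ?_⟩
      have : A * A ≤ A * C' := mul_le_mul_of_nonneg_left (by omega) hA.le
      have e : A * 1 ^ 2 + 2 * B * 1 * 0 + C * 0 ^ 2 = A := by ring
      rw [e]
      nlinarith

/-- A positive ternary form of determinant `1` takes only values that are sums of three squares. -/
theorem ternary_reduce (N : ℕ) : ∀ a b c d e f : ℤ, a.toNat ≤ N → 0 < a → 0 < a * b - f ^ 2 →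
    a * b * c + 2 * d * e * f - a * d ^ 2 - b * e ^ 2 - c * f ^ 2 = 1 →
    ∀ x y z : ℤ, ∃ u v w : ℤ,
      a * x ^ 2 + b * y ^ 2 + c * z ^ 2 + 2 * d * y * z + 2 * e * x * z + 2 * f * x * y
        = u ^ 2 + v ^ 2 + w ^ 2 := by
  induction N with
  | zero => intro a b c d e f h1 h2; omega
  | succ N ih =>
    intro a b c d e f hN ha hab hdet x y z
    have hg : (a * b - f ^ 2) * (a * c - e ^ 2) - (a * d - e * f) ^ 2 = a := by
      linear_combination a * hdet
    obtain ⟨p, q, r, s, h1, h2, h3⟩ :=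
      binary_reduce _ (a * b - f ^ 2) (a * d - e * f) (a * c - e ^ 2) a le_rfl hab ha hg
    obtain ⟨b', hb'⟩ : ∃ t, t = b * p ^ 2 + 2 * d * p * r + c * r ^ 2 := ⟨_, rfl⟩
    obtain ⟨c', hc'⟩ : ∃ t, t = b * q ^ 2 + 2 * d * q * s + c * s ^ 2 := ⟨_, rfl⟩
    obtain ⟨d', hd'⟩ : ∃ t, t = b * p * q + d * (p * s + q * r) + c * r * s := ⟨_, rfl⟩
    obtain ⟨e', he'⟩ : ∃ t, t = f * q + e * s := ⟨_, rfl⟩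
    obtain ⟨f', hf'⟩ : ∃ t, t = f * p + e * r := ⟨_, rfl⟩
    obtain ⟨y', hy'⟩ : ∃ t, t = s * y - q * z := ⟨_, rfl⟩
    obtain ⟨z', hz'⟩ : ∃ t, t = p * z - r * y := ⟨_, rfl⟩
    have hy : y = p * y' + q * z' := by rw [hy', hz']; linear_combination (-y) * h1
    have hz : z = r * y' + s * z' := by rw [hy', hz']; linear_combination (-z) * h1
    have hval : a * x ^ 2 + b * y ^ 2 + c * z ^ 2 + 2 * d * y * z + 2 * e * x * z + 2 * f * x * y
        = a * x ^ 2 + b' * y' ^ 2 + c' * z' ^ 2 + 2 * d' * y' * z' + 2 * e' * x * z'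
          + 2 * f' * x * y' := by
      rw [hy, hz, hb', hc', hd', he', hf']; ring
    have hdet' : a * b' * c' + 2 * d' * e' * f' - a * d' ^ 2 - b' * e' ^ 2 - c' * f' ^ 2 = 1 := by
      have : a * b' * c' + 2 * d' * e' * f' - a * d' ^ 2 - b' * e' ^ 2 - c' * f' ^ 2
        = (a * b * c + 2 * d * e * f - a * d ^ 2 - b * e ^ 2 - c * f ^ 2) * (p * s - q * r) ^ 2 := by
        rw [hb', hc', hd', he', hf']; ring
      rw [this, hdet, h1]; norm_num
    have hA : (a * b - f ^ 2) * p ^ 2 + 2 * (a * d - e * f) * p * r + (a * c - e ^ 2) * r ^ 2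
        = a * b' - f' ^ 2 := by rw [hb', hf']; ring
    rw [hA] at h2 h3
    rw [hval]
    clear hval hA hy hz hy' hz' hb' hc' hd' he' hf' h1 hg hdet hab
    by_cases ha1 : a = 1
    · subst ha1
      have hA1 : 1 * b' - f' ^ 2 = 1 := by nlinarith
      refine ⟨x + f' * y' + e' * z', y' + (d' - e' * f') * z', z', ?_⟩
      have hb : b' = 1 + f' ^ 2 := by linarith
      subst hb
      linear_combination z' ^ 2 * hdet'
    obtain ⟨k, hk1, hk2⟩ : ∃ k : ℤ, -a ≤ 2 * (f' + k * a) ∧ 2 * (f' + k * a) ≤ a := by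
      refine ⟨-((2 * f' + a) / (2 * a)), ?_, ?_⟩
      · have := Int.ediv_mul_le (2 * f' + a) (b := 2 * a) (by omega)
        nlinarith
      · have := Int.lt_ediv_add_one_mul_self (2 * f' + a) (b := 2 * a) (by omega)
        nlinarith
    obtain ⟨F, hF⟩ : ∃ t, t = f' + k * a := ⟨_, rfl⟩
    obtain ⟨B, hB⟩ : ∃ t, t = b' + 2 * k * f' + k ^ 2 * a := ⟨_, rfl⟩
    have hAB : a * b' - f' ^ 2 = a * B - F ^ 2 := by rw [hF, hB]; ring
    rw [← hF] at hk1 hk2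
    rw [hAB] at h2 h3
    have hsq : 4 * F ^ 2 ≤ a ^ 2 := by nlinarith
    by_cases hlt : B < a
    · have hBpos : 0 < B := by
        by_contra h
        nlinarith [sq_nonneg F]
      obtain ⟨u, v, w, h⟩ := ih B a c' e' (d' + k * e') F (by omega) hBpos (by linarith)
        (by rw [← hdet', hF, hB]; ring) y' (x - k * y') z'
      refine ⟨u, v, w, ?_⟩
      rw [← h, hF, hB]; ring
    · exfalso
      have h5 : a * a ≤ a * B := mul_le_mul_of_nonneg_left (by omega) ha.le
      have h6 : 3 * a ^ 2 ≤ 4 * (a * B - F ^ 2) := by nlinarith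
      have h7 : (3 * a ^ 2) ^ 2 ≤ (4 * (a * B - F ^ 2)) ^ 2 :=
        pow_le_pow_left₀ (by positivity) h6 2
      have h8 : a * (27 * a ^ 3) ≤ a * 64 := by nlinarith
      have h9 : 27 * a ^ 3 ≤ 64 := le_of_mul_le_mul_left h8 ha
      have h10 : 2 ≤ a := by omega
      have : (2 : ℤ) ^ 3 ≤ a ^ 3 := pow_le_pow_left₀ (by norm_num) h10 3
      omega

theorem two_mul_odd_three_squares (m : ℕ) (hm : 0 < m) (hodd : Odd m) :
    ∃ u v w : ℤ, 2 * (m : ℤ) = u ^ 2 + v ^ 2 + w ^ 2 := by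
  obtain ⟨j, hj⟩ := hodd
  have hco : Nat.Coprime (2 * m - 1) (8 * m) := by
    have h1 : Nat.Coprime (2 * m - 1) (2 * m) := by
      have := Nat.coprime_self_add_right (m := 2 * m - 1) (n := 1)
      rw [show 2 * m - 1 + 1 = 2 * m by omega] at this
      exact this.2 (Nat.coprime_one_right _)
    have h2 : Nat.Coprime (2 * m - 1) 2 := Nat.Coprime.coprime_mul_right_right h1
    rw [show 8 * m = 2 * (2 * (2 * m)) by ring]
    exact h2.mul_right (h2.mul_right h1)
  obtain ⟨p, hpgt, hp, hpm⟩ := Nat.forall_exists_prime_gt_and_modEq (8 * m) (by omega) hco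
  obtain ⟨v, hv⟩ : ∃ v, p = 2 * m - 1 + 8 * m * v := by
    have h := (Nat.modEq_iff_dvd' (by omega)).1 hpm.symm
    obtain ⟨v, hv⟩ := h
    exact ⟨v, by omega⟩
  obtain ⟨b, hb⟩ : ∃ b, b = 4 * v + 1 := ⟨_, rfl⟩
  have hpb : p + 1 = b * (2 * m) := by
    rw [hv, hb]
    have : 2 * m - 1 + 8 * m * v + 1 = 2 * m + 8 * m * v := by omega
    rw [this]; ring
  have hp4 : p % 4 = 1 := by
    have : 8 * m * v = 4 * (2 * (m * v)) := by ring
    omega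
  have : Fact p.Prime := ⟨hp⟩
  have hbodd : Odd b := ⟨2 * v, by omega⟩
  have hpodd : Odd p := Nat.odd_iff.2 (by omega)
  have hJ : jacobiSym (-(b : ℤ)) p = 1 := by
    rw [jacobiSym.neg _ hpodd, ZMod.χ₄_nat_one_mod_four hp4, one_mul,
      jacobiSym.quadratic_reciprocity_one_mod_four (by omega) hpodd,
      jacobiSym.mod_left' (show (p : ℤ) % b = (-1) % b from ?_), jacobiSym.at_neg_one hbodd,
      ZMod.χ₄_nat_one_mod_four (by omega)]
    apply Int.ModEq.symm
    rw [Int.modEq_iff_dvd]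
    refine ⟨2 * (m : ℤ), ?_⟩
    have : (p : ℤ) + 1 = b * (2 * m) := by exact_mod_cast hpb
    linarith
  obtain ⟨r, hr⟩ := ZMod.isSquare_of_jacobiSym_eq_one hJ
  obtain ⟨t, rfl⟩ := ZMod.intCast_surjective r
  have hdvd : (p : ℤ) ∣ b + t ^ 2 := by
    rw [← ZMod.intCast_zmod_eq_zero_iff_dvd]
    push_cast at hr ⊢
    linear_combination -hr
  obtain ⟨a, ha⟩ := hdvd
  have hpb' : (p : ℤ) + 1 = b * (2 * m) := by exact_mod_cast hpb
  have hp0 : (0 : ℤ) < p := by exact_mod_cast hp.pos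
  have hb0 : (0 : ℤ) < b := by omega
  have ha0 : 0 < a := by
    by_contra h
    nlinarith [sq_nonneg t]
  obtain ⟨x, y, z, h⟩ := ternary_reduce _ a p (2 * m) 0 1 t le_rfl ha0 (by linarith)
    (by linear_combination (-2 * (m : ℤ)) * ha - hpb') 0 0 1
  exact ⟨x, y, z, by rw [← h]; ring⟩

theorem odd_eq_two_sq_add_sq_add_sq (m : ℕ) (hm : 0 < m) (hodd : Odd m) :
    ∃ a b c : ℤ, (m : ℤ) = 2 * a ^ 2 + b ^ 2 + c ^ 2 := by
  obtain ⟨u, v, w, h⟩ := two_mul_odd_three_squares m hm hodd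
  have key : ∀ u v w : ℤ, 2 * (m : ℤ) = u ^ 2 + v ^ 2 + w ^ 2 → u % 2 = 0 → v % 2 = 1 →
      w % 2 = 1 → ∃ a b c : ℤ, (m : ℤ) = 2 * a ^ 2 + b ^ 2 + c ^ 2 := by
    intro u v w h hu hv hw
    obtain ⟨a, rfl⟩ : ∃ a, u = 2 * a := ⟨u / 2, by omega⟩
    obtain ⟨s, rfl⟩ : ∃ s, v = 2 * s + 1 := ⟨v / 2, by omega⟩
    obtain ⟨t, rfl⟩ : ∃ t, w = 2 * t + 1 := ⟨w / 2, by omega⟩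
    exact ⟨a, s + t + 1, s - t, by linarith⟩
  obtain ⟨j, hj⟩ := hodd
  have par : ∀ t : ℤ, (t % 2 = 0 ∧ t ^ 2 % 4 = 0) ∨ (t % 2 = 1 ∧ t ^ 2 % 4 = 1) := by
    intro t
    rcases Int.even_or_odd' t with ⟨k, rfl | rfl⟩
    · left
      refine ⟨by omega, ?_⟩
      ring_nf; omega
    · right
      refine ⟨by omega, ?_⟩
      ring_nf; omega
  rcases par u with ⟨hu, hu'⟩ | ⟨hu, hu'⟩ <;> rcases par v with ⟨hv, hv'⟩ | ⟨hv, hv'⟩ <;>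
    rcases par w with ⟨hw, hw'⟩ | ⟨hw, hw'⟩
  all_goals first
    | exact key u v w h hu hv hw
    | exact key v u w (by linarith) hv hu hw
    | exact key w u v (by linarith) hw hu hv
    | (exfalso; omega)
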